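/- Let f₀, f₁ be entire functions with no common zeros, and suppose the entire functions f₀, f₁ and f₀ − f₁ all have no zeros in ℂ (i.e., the holomorphic curve (f₀ : f₁) : ℂ → ℙ¹ omits the three points (1:0), (0:1) and (1:1)). Then f₀(z)·f₁(0) = f₁(z)·f₀(0) for all z ∈ ℂ; that is, the curve is constant. -/

import Mathlib

/-!
The quotient `g = f₀ / f₁` is an entire function omitting `0` and `1`, so the claim is the little
Picard theorem; the proof follows Landau and König.

Since `g` has no zeros, `g = exp (2πiF)` with `F` entire, and `F` omits every integer because `g`
omits `1`. In particular `F (F - 1)` has no zeros, so it has an entire square root `S`, and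
`W = 2F - 1 + 2S` satisfies `W (2F - 1 - 2S) = 1`. Hence `W = exp H` with `H` entire and
`exp H + exp (-H) = 4F - 2`. So `H` omits every `w` with `exp w + exp (-w) = 4m - 2`, `m ∈ ℤ`.
These points form a net in the plane (`exists_mem_ball_exp_add_exp_neg`): every disc of radius `10`
contains one. On the other hand, a nonconstant entire function has arbitrarily large discs in its
image (`exists_ball_subset_range`, a form of Bloch's theorem). So `H`, and with it `g`, is constant.
-/

open Metric Complex Set Filter

/-- Entire functions without zeros have entire logarithms. -/
lemma exists_entire_log {g : ℂ → ℂ} (hg : Differentiable ℂ g) (h0 : ∀ z, g z ≠ 0) :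
    ∃ L : ℂ → ℂ, Differentiable ℂ L ∧ ∀ z, exp (L z) = g z := by
  have huniv : IsSimplyConnected (univ : Set ℂ) := by
    have := convex_univ.contractibleSpace (univ_nonempty (α := ℂ))
    exact SimplyConnectedSpace.ofContractible _
  obtain ⟨L, hLc, hL⟩ := exists_continuousOn_eqOn_exp_comp huniv isOpen_univ
    hg.continuous.continuousOn (by simpa using h0)
  have hL' : ∀ z, exp (L z) = g z := fun z => hL (mem_univ z)
  refine ⟨L, fun z => ?_, hL'⟩
  exact (HasDerivAt.of_comp_left (hLc.continuousAt univ_mem) (Complex.hasDerivAt_exp (L z))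
    (hg z).hasDerivAt (exp_ne_zero _) (Eventually.of_forall hL')).differentiableAt

/-- If the derivative of `f` on the disc of radius `r` about `a` is at most twice as large as at
`a`, then the image of `f` contains the disc of radius `r ‖f' a‖ / 32` about `f a`: on the circle
of radius `r / 8`, the function `f` is close to its linear part at `a`. -/
lemma ball_subset_range_of_deriv_le {f : ℂ → ℂ} (hf : Differentiable ℂ f) {a : ℂ} {r : ℝ}
    (hr : 0 < r) (ha : deriv f a ≠ 0) (hb : ∀ z ∈ ball a r, ‖deriv f z‖ ≤ 2 * ‖deriv f a‖) :
    ball (f a) (r * ‖deriv f a‖ / 32) ⊆ range f := by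
  set M := ‖deriv f a‖ with hM
  have hMpos : 0 < M := norm_pos_iff.2 ha
  have hd : Differentiable ℂ (deriv f) := by
    intro z
    exact (hf.analyticAt z).deriv.differentiableAt
  -- The Schwarz lemma, applied to the derivative.
  have hlip : ∀ z ∈ ball a r, ‖deriv f z - deriv f a‖ ≤ 3 * M / r * ‖z - a‖ := by
    intro z hz
    have := Complex.dist_le_div_mul_dist_of_mapsTo_ball (R₂ := 3 * M) hd.differentiableOn
      (fun w hw => ?_) hz
    · simpa [dist_eq_norm] using this
    · rw [mem_closedBall, dist_eq_norm]
      linarith [norm_sub_le (deriv f w) (deriv f a), hb w hw]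
  have hρ : closedBall a (r / 8) ⊆ ball a r := closedBall_subset_ball (by linarith)
  have hlin : ∀ z ∈ closedBall a (r / 8),
      ‖(f z - deriv f a * z) - (f a - deriv f a * a)‖ ≤ 3 * M / 8 * ‖z - a‖ := by
    intro z hz
    have hD : ∀ x, HasDerivAt (fun z => f z - deriv f a * z) (deriv f x - deriv f a) x := by
      intro x
      simpa using! (hf x).hasDerivAt.sub ((hasDerivAt_id x).const_mul (deriv f a))
    refine Convex.norm_image_sub_le_of_norm_hasDerivWithin_le
      (f := fun z => f z - deriv f a * z) (s := closedBall a (r / 8))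
      (fun x _ => (hD x).hasDerivWithinAt) (fun x hx => ?_) (convex_closedBall _ _)
      (mem_closedBall_self (by linarith)) hz
    refine (hlip x (hρ hx)).trans ?_
    rw [mem_closedBall, dist_eq_norm] at hx
    calc 3 * M / r * ‖x - a‖ ≤ 3 * M / r * (r / 8) := by gcongr
      _ = 3 * M / 8 := by field_simp
  have hlow : ∀ z ∈ closedBall a (r / 8), 5 * M / 8 * ‖z - a‖ ≤ ‖f z - f a‖ := by
    intro z hz
    have h1 := hlin z hz
    have h2 : deriv f a * (z - a)
        = (f z - f a) - ((f z - deriv f a * z) - (f a - deriv f a * a)) := by ring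
    have h3 : M * ‖z - a‖ = ‖deriv f a * (z - a)‖ := by rw [norm_mul]
    rw [h2] at h3
    linarith [norm_sub_le (f z - f a) ((f z - deriv f a * z) - (f a - deriv f a * a))]
  have hfreq : ∃ᶠ z in nhds a, f z ≠ f a := by
    have h := (hf a).hasDerivAt.eventually_ne (c := f a) ha
    exact h.frequently.filter_mono nhdsWithin_le_nhds
  have key := DiffContOnCl.ball_subset_image_closedBall (f := f) (z₀ := a) (r := r / 8)
    (ε := r * M / 16) hf.diffContOnCl (by linarith) (fun z hz => ?_) hfreq
  · refine Subset.trans ?_ (key.trans (image_subset_range _ _))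
    exact ball_subset_ball (by linarith)
  · have h := hlow z (sphere_subset_closedBall hz)
    rw [mem_sphere, dist_eq_norm] at hz
    rw [hz] at h
    nlinarith [mul_pos hr hMpos]

/-- A form of Bloch's theorem: the image of a nonconstant entire function contains discs of any
radius. -/
lemma exists_ball_subset_range {f : ℂ → ℂ} (hf : Differentiable ℂ f) {p : ℂ}
    (hp : deriv f p ≠ 0) (R : ℝ) : ∃ c, ball c R ⊆ range f := by
  have hMp : 0 < ‖deriv f p‖ := norm_pos_iff.2 hp
  -- Chosen so that the final disc has radius at least `ρ * ‖deriv f p‖ / 64 ≥ R`.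
  set ρ : ℝ := 64 * (|R| + 1) / ‖deriv f p‖ with hρdef
  have hρ : 0 < ρ := by positivity
  have hcont : Continuous (deriv f) := by
    refine continuous_iff_continuousAt.2 fun z => (hf.analyticAt z).deriv.continuousAt
  -- Maximise the derivative weighted by the distance to the boundary of a large disc.
  obtain ⟨a, ha, hmax⟩ := (isCompact_closedBall p ρ).exists_isMaxOn
    ⟨p, mem_closedBall_self hρ.le⟩
    (f := fun z => ‖deriv f z‖ * (ρ - ‖z - p‖)) (by fun_prop)
  have hmax' : ∀ z ∈ closedBall p ρ,
      ‖deriv f z‖ * (ρ - ‖z - p‖) ≤ ‖deriv f a‖ * (ρ - ‖a - p‖) := fun z hz => hmax hz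
  rw [mem_closedBall, dist_eq_norm] at ha
  have hpa := hmax' p (mem_closedBall_self hρ.le)
  simp only [sub_self, norm_zero, sub_zero] at hpa
  have hpos : 0 < ‖deriv f a‖ * (ρ - ‖a - p‖) := lt_of_lt_of_le (by positivity) hpa
  have hda : deriv f a ≠ 0 := by
    intro h
    simp [h] at hpos
  have hra : 0 < ρ - ‖a - p‖ := pos_of_mul_pos_right hpos (norm_nonneg _)
  set r := (ρ - ‖a - p‖) / 2 with hrdef
  have hr : 0 < r := by positivity
  refine ⟨f a, Subset.trans (ball_subset_ball ?_) (ball_subset_range_of_deriv_le hf hr hda ?_)⟩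
  · have h1 : ‖deriv f p‖ * ρ = 64 * (|R| + 1) := by
      rw [hρdef]
      field_simp
    have h2 : ρ - ‖a - p‖ = 2 * r := by rw [hrdef]; ring
    rw [h1, h2] at hpa
    linarith [le_abs_self R]
  · intro z hz
    rw [mem_ball, dist_eq_norm] at hz
    have htri : ‖z - p‖ ≤ ‖z - a‖ + ‖a - p‖ := norm_sub_le_norm_sub_add_norm_sub z a p
    have hrz : r ≤ ρ - ‖z - p‖ := by linarith
    have h := hmax' z (by rw [mem_closedBall, dist_eq_norm]; linarith)
    have h2 : ρ - ‖a - p‖ = 2 * r := by rw [hrdef]; ring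
    rw [h2] at h
    have h3 : ‖deriv f z‖ * r ≤ ‖deriv f z‖ * (ρ - ‖z - p‖) := by gcongr
    refine le_of_mul_le_mul_right (a := r) ?_ hr
    linarith

/-- On the nonnegative half-line, `cosh` takes odd integer values in every interval of length `2`,
since it increases there by at least `2`. -/
lemma exists_cosh_eq_of_nonneg {x : ℝ} (hx : 0 ≤ x) :
    ∃ t, |t - x| ≤ 2 ∧ ∃ m : ℤ, Real.cosh t = 2 * m - 1 := by
  have h2 : 3 ≤ Real.cosh 2 := by
    have h1 := Real.cosh_sq 1
    have h3 : Real.cosh 2 = Real.cosh 1 ^ 2 + Real.sinh 1 ^ 2 := by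
      rw [← Real.cosh_two_mul]; norm_num
    have h4 : (1 : ℝ) ≤ Real.sinh 1 := Real.self_le_sinh_iff.2 zero_le_one
    nlinarith
  have hinc : Real.cosh x + 2 ≤ Real.cosh (x + 2) := by
    rw [Real.cosh_add]
    have h3 : 0 ≤ Real.sinh x * Real.sinh 2 :=
      mul_nonneg (Real.sinh_nonneg_iff.2 hx) (Real.sinh_nonneg_iff.2 (by norm_num))
    nlinarith [Real.one_le_cosh x]
  set m : ℤ := ⌈(Real.cosh x + 1) / 2⌉ with hm
  have hm1 : (Real.cosh x + 1) / 2 ≤ m := Int.le_ceil _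
  have hm2 : (m : ℝ) < (Real.cosh x + 1) / 2 + 1 := Int.ceil_lt_add_one _
  obtain ⟨t, ht, hte⟩ := intermediate_value_Icc (by linarith : x ≤ x + 2)
    Real.continuous_cosh.continuousOn
    (show (2 * m - 1 : ℝ) ∈ Icc (Real.cosh x) (Real.cosh (x + 2)) from
      ⟨by linarith, by linarith⟩)
  refine ⟨t, ?_, m, hte⟩
  rw [abs_le]
  constructor <;> linarith [ht.1, ht.2]

lemma exists_cosh_eq (x : ℝ) : ∃ t, |t - x| ≤ 2 ∧ ∃ m : ℤ, Real.cosh t = 2 * m - 1 := by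
  rcases le_total 0 x with hx | hx
  · exact exists_cosh_eq_of_nonneg hx
  · obtain ⟨t, ht, m, hm⟩ := exists_cosh_eq_of_nonneg (neg_nonneg.2 hx)
    refine ⟨-t, ?_, m, by rwa [Real.cosh_neg]⟩
    rw [← abs_neg]
    convert ht using 2
    ring

/-- The solutions of `2 cosh w = 4m - 2`, `m ∈ ℤ`, meet every disc of radius `10`. -/
lemma exists_mem_ball_exp_add_exp_neg (c : ℂ) :
    ∃ w ∈ ball c 10, ∃ m : ℤ, exp w + exp (-w) = 4 * m - 2 := by
  obtain ⟨t, ht, m, hm⟩ := exists_cosh_eq c.re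
  set n : ℤ := ⌊c.im / (2 * Real.pi)⌋ with hn
  have hpi := Real.pi_pos
  have hn1 : (n : ℝ) * (2 * Real.pi) ≤ c.im :=
    (le_div_iff₀ (by positivity)).1 (Int.floor_le _)
  have hn2 : c.im < (n + 1 : ℝ) * (2 * Real.pi) :=
    (div_lt_iff₀ (by positivity)).1 (Int.lt_floor_add_one _)
  refine ⟨t + n * (2 * Real.pi * I), ?_, m, ?_⟩
  · rw [mem_ball, dist_eq_norm]
    refine lt_of_le_of_lt (norm_le_abs_re_add_abs_im _) ?_
    have him : |((t : ℂ) + n * (2 * Real.pi * I) - c).im| ≤ 2 * Real.pi := by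
      have : ((t : ℂ) + n * (2 * Real.pi * I) - c).im = n * (2 * Real.pi) - c.im := by simp
      rw [this, abs_le]
      constructor <;> linarith
    have hre : |((t : ℂ) + n * (2 * Real.pi * I) - c).re| ≤ 2 := by
      have : ((t : ℂ) + n * (2 * Real.pi * I) - c).re = t - c.re := by simp
      rwa [this]
    linarith [Real.pi_lt_four]
  · have h1 : exp (t + n * (2 * Real.pi * I)) = exp t := exp_periodic.int_mul n _
    have h2 : exp (-(t + n * (2 * Real.pi * I))) = exp (-t) := by
      rw [exp_neg, h1, exp_neg]
    have h3 : Complex.cosh t = 2 * m - 1 := by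
      rw [← Complex.ofReal_cosh, hm]
      push_cast
      ring
    rw [Complex.cosh] at h3
    rw [h1, h2]
    linear_combination 2 * h3

/-- The little Picard theorem, for the omitted values `0` and `1`. -/
lemma little_picard {g : ℂ → ℂ} (hg : Differentiable ℂ g) (h0 : ∀ z, g z ≠ 0)
    (h1 : ∀ z, g z ≠ 1) (z : ℂ) : g z = g 0 := by
  obtain ⟨L, hL, hLg⟩ := exists_entire_log hg h0
  set F : ℂ → ℂ := fun z => L z / (2 * Real.pi * I) with hF
  have hFd : Differentiable ℂ F := hL.div_const _
  have hFL : ∀ z, L z = F z * (2 * Real.pi * I) := fun z =>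
    (div_mul_cancel₀ _ two_pi_I_ne_zero).symm
  have hFint : ∀ z (m : ℤ), F z ≠ m := by
    intro z m h
    apply h1 z
    rw [← hLg, hFL, h, exp_int_mul_two_pi_mul_I]
  have hF0 : ∀ z, F z ≠ 0 := fun z => by simpa using hFint z 0
  have hF1 : ∀ z, F z - 1 ≠ 0 := fun z => sub_ne_zero.2 (by simpa using hFint z 1)
  obtain ⟨K, hK, hKF⟩ := exists_entire_log (g := fun z => F z * (F z - 1))
    (hFd.mul (hFd.sub_const 1)) (fun z => mul_ne_zero (hF0 z) (hF1 z))
  -- `exp (K z / 2)` is the square root `S` of `F (F - 1)`.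
  have hS : ∀ z, exp (K z / 2) ^ 2 = F z * (F z - 1) := by
    intro z
    rw [← hKF, ← exp_nat_mul]
    congr 1
    push_cast
    ring
  have hprod : ∀ z, (2 * F z - 1 + 2 * exp (K z / 2)) * (2 * F z - 1 - 2 * exp (K z / 2)) = 1 := by
    intro z
    linear_combination (-4) * hS z
  obtain ⟨H, hH, hHW⟩ := exists_entire_log (g := fun z => 2 * F z - 1 + 2 * exp (K z / 2))
    (by fun_prop) (fun z => left_ne_zero_of_mul_eq_one (hprod z))
  have hHF : ∀ z, exp (H z) + exp (-H z) = 4 * F z - 2 := by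
    intro z
    have h : exp (-H z) = 2 * F z - 1 - 2 * exp (K z / 2) := by
      rw [exp_neg, hHW]
      exact inv_eq_of_mul_eq_one_right (hprod z)
    rw [h, hHW]
    ring
  have hH' : ∀ z, deriv H z = 0 := by
    by_contra! h
    obtain ⟨p, hp⟩ := h
    obtain ⟨c, hc⟩ := exists_ball_subset_range hH hp 10
    obtain ⟨w, hw, m, hm⟩ := exists_mem_ball_exp_add_exp_neg c
    obtain ⟨z, rfl⟩ := hc hw
    rw [hHF] at hm
    exact hFint z m (by linear_combination hm / 4)
  have hconst : H z = H 0 := is_const_of_deriv_eq_zero hH hH' z 0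
  have hFz : F z = F 0 := by
    have e1 := hHF z
    rw [hconst, hHF 0] at e1
    linear_combination -e1 / 4
  rw [← hLg z, ← hLg 0, hFL z, hFL 0, hFz]

/-- A holomorphic curve `(f₀ : f₁) : ℂ → ℙ¹` (given by entire functions `f₀, f₁`
without common zeros) omitting the three points `(1:0)`, `(0:1)`, `(1:1)`
(i.e. `f₁`, `f₀`, `f₀ - f₁` are zero-free) is constant. -/
theorem curve_omitting_three_points_constant (f₀ f₁ : ℂ → ℂ)
    (hf₀ : Differentiable ℂ f₀) (hf₁ : Differentiable ℂ f₁)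
    (hcommon : ∀ z : ℂ, f₀ z ≠ 0 ∨ f₁ z ≠ 0)
    (h₀ : ∀ z : ℂ, f₀ z ≠ 0) (h₁ : ∀ z : ℂ, f₁ z ≠ 0)
    (h₂ : ∀ z : ℂ, f₀ z - f₁ z ≠ 0) :
    ∀ z : ℂ, f₀ z * f₁ 0 = f₁ z * f₀ 0 := by
  intro z
  have h := little_picard (g := fun z => f₀ z / f₁ z) (hf₀.div hf₁ h₁)
    (fun z => div_ne_zero (h₀ z) (h₁ z))
    (fun z => by
      rw [Ne, div_eq_one_iff_eq (h₁ z)]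
      exact sub_ne_zero.1 (h₂ z)) z
  rw [div_eq_div_iff (h₁ z) (h₁ 0)] at h
  linear_combination h
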